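/- arXiv:1409.7366 — 2 statements merged into one kernel-verified Lean document; each statement's English description precedes it below -/
import Mathlib

section
/- For all x > 0, the Mittag-Leffler function E_β(-x) satisfies 1/(1 + Γ(1-β)x) ≤ E_β(-x) ≤ 1/(1 + x/Γ(1+β)). -/
open MeasureTheory Real Set

/-- The Mittag-Leffler function `E_β(x) = ∑_{k≥0} x^k / Γ(1+βk)`. -/
noncomputable def mittagLeffler (β x : ℝ) : ℝ := ∑' k : ℕ, x ^ k / Real.Gamma (1 + β * k)

/-!
Put `k_a(t) = t^(a-1) / Γ(a)`, so that `k_a * k_b = k_{a+b}` for the convolution on `(0, t)`, and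
`e_c(t) = t^(c-1) E_{β,c}(-t^β) = ∑ (-1)^n k_{c+βn}(t)`. Integrating termwise gives
`k_a * e_c = e_{a+c}`, and the series itself gives `e_c = k_c - e_{c+β}`. In particular
`e_β = k_β - k_β * e_β`, that is, `e_β` is the resolvent of the log-convex kernel `k_β`, and
therefore it is positive: at a first zero the equation would contradict the one at a nearby earlier
time. Now `e_1(t) = E_β(-t^β) = 1 - ∫_0^t e_β` is antitone. As `k_{1-β}` is antitone too,
`e_1(t) = (k_{1-β} * e_β)(t) ≥ k_{1-β}(t) (1 - e_1(t))`, which is the lower bound, while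
`1 - e_1(t) = (k_β * e_1)(t) ≥ k_{1+β}(t) e_1(t)` is the upper bound.
-/

open Filter Topology

section Resolvent

/-- `f` is the resolvent of the convolution kernel `k` on `(0, ∞)`: the solution of the Volterra
equation `f = k - k * f`. Integrability is a field because the integral would otherwise be `0` by
convention. -/
structure IsResolvent (k f : ℝ → ℝ) : Prop where
  intervalIntegrable : ∀ ⦃t⦄, 0 < t → IntervalIntegrable (fun s ↦ k (t - s) * f s) volume 0 t
  eq_sub_integral : ∀ ⦃t⦄, 0 < t → f t = k t - ∫ s in 0..t, k (t - s) * f s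

/-- The form in which log-convexity of a kernel `k` enters: for `t₁ ≤ t₀` the ratio
`k (t₀ - s) / k (t₁ - s)` is at most its value at `s = 0`. Multiplied out, so that no division
occurs. -/
def AntitoneShiftRatio (k : ℝ → ℝ) : Prop :=
  ∀ ⦃s t₁ t₀⦄, 0 < s → s < t₁ → t₁ ≤ t₀ → k (t₀ - s) * k t₁ ≤ k t₀ * k (t₁ - s)

variable {k f : ℝ → ℝ} {t₀ t₁ t : ℝ}

lemma IsResolvent.intervalIntegrable_of_le (h : IsResolvent k f) (ht₁ : 0 < t₁) (ht : t₁ ≤ t₀) :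
    IntervalIntegrable (fun s ↦ k (t₀ - s) * f s) volume 0 t₁ ∧
      IntervalIntegrable (fun s ↦ k (t₀ - s) * f s) volume t₁ t₀ := by
  have hint := h.intervalIntegrable (ht₁.trans_le ht)
  have hmem : t₁ ∈ uIcc 0 t₀ := mem_uIcc_of_le ht₁.le ht
  exact ⟨hint.mono_set (uIcc_subset_uIcc_left hmem), hint.mono_set (uIcc_subset_uIcc_right hmem)⟩

lemma IsResolvent.mul_le_mul_add_integral (h : IsResolvent k f) (hk : AntitoneShiftRatio k)
    (ht₁ : 0 < t₁) (ht : t₁ ≤ t₀) (hf : ∀ s ∈ Ioo 0 t₁, 0 ≤ f s) :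
    k t₀ * f t₁ ≤ k t₁ * (f t₀ + ∫ s in t₁..t₀, k (t₀ - s) * f s) := by
  obtain ⟨hint₀, hint⟩ := h.intervalIntegrable_of_le ht₁ ht
  have hmono : k t₁ * ∫ s in 0..t₁, k (t₀ - s) * f s ≤ k t₀ * ∫ s in 0..t₁, k (t₁ - s) * f s := by
    rw [← intervalIntegral.integral_const_mul, ← intervalIntegral.integral_const_mul]
    refine intervalIntegral.integral_mono_on_of_le_Ioo ht₁.le (hint₀.const_mul _)
      ((h.intervalIntegrable ht₁).const_mul _) fun s hs ↦ ?_
    rw [← mul_assoc, ← mul_assoc, mul_comm (k t₁)]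
    exact mul_le_mul_of_nonneg_right (hk hs.1 hs.2 ht) (hf s hs)
  have heq₀ := h.eq_sub_integral (ht₁.trans_le ht)
  rw [← intervalIntegral.integral_add_adjacent_intervals hint₀ hint] at heq₀
  rw [h.eq_sub_integral ht₁, heq₀]
  linarith

lemma tendsto_mul_integral_nhdsLT (hkc : ContinuousOn k (Ioi 0))
    (hki : ∀ t, 0 < t → IntervalIntegrable k volume 0 t) (ht₀ : 0 < t₀) :
    Tendsto (fun t ↦ k t * ∫ s in t..t₀, k (t₀ - s)) (𝓝[<] t₀) (𝓝 0) := by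
  have hint : IntervalIntegrable (fun s ↦ k (t₀ - s)) volume t₀ 0 := by
    simpa using (hki t₀ ht₀).comp_sub_left t₀
  have hprim : Tendsto (fun t ↦ ∫ s in t..t₀, k (t₀ - s)) (𝓝[<] t₀) (𝓝 0) := by
    have hcont := intervalIntegral.continuousOn_primitive_interval' hint left_mem_uIcc
    have hlim : Tendsto (fun t ↦ -∫ s in t₀..t, k (t₀ - s)) (𝓝[uIcc t₀ 0] t₀)
        (𝓝 (-∫ s in t₀..t₀, k (t₀ - s))) := (hcont t₀ left_mem_uIcc).neg
    simp only [← intervalIntegral.integral_symm, intervalIntegral.integral_same, neg_zero,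
      uIcc_of_ge ht₀.le] at hlim
    exact hlim.mono_left ((nhdsWithin_le_of_mem (Ioo_mem_nhdsLT ht₀)).trans
      (nhdsWithin_mono _ Ioo_subset_Icc_self))
  have hk : Tendsto k (𝓝[<] t₀) (𝓝 (k t₀)) :=
    (hkc.continuousAt (Ioi_mem_nhds ht₀)).tendsto.mono_left nhdsWithin_le_nhds
  simpa using hk.mul hprim

/- The equations at `t₀` and at a maximum point `t₁` of `f` on a short interval `[v, t₀]` are
incompatible with `f t₀ ≤ 0`. -/
lemma IsResolvent.pos_of_forall_lt_pos (h : IsResolvent k f) (hk : AntitoneShiftRatio k)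
    (hkpos : ∀ t, 0 < t → 0 < k t) (hkc : ContinuousOn k (Ioi 0))
    (hki : ∀ t, 0 < t → IntervalIntegrable k volume 0 t) (hfc : ContinuousOn f (Ioi 0))
    (ht₀ : 0 < t₀) (hf : ∀ s ∈ Ioo 0 t₀, 0 < f s) : 0 < f t₀ := by
  by_contra! hneg
  obtain ⟨u, hu, hsmall⟩ := (mem_nhdsLT_iff_exists_Ioo_subset' ht₀).1
    (((tendsto_mul_integral_nhdsLT hkc hki ht₀).eventually (gt_mem_nhds (hkpos t₀ ht₀))).and
      (Ioo_mem_nhdsLT ht₀))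
  obtain ⟨v, hv⟩ := exists_between (mem_Iio.1 hu)
  have hv₀ : v ∈ Ioo 0 t₀ := (hsmall hv).2
  obtain ⟨t₁, ht₁, hmax⟩ := isCompact_Icc.exists_isMaxOn (nonempty_Icc.2 hv.2.le)
    (hfc.mono fun s hs ↦ hv₀.1.trans_le hs.1)
  have hft₁ : 0 < f t₁ := (hf v hv₀).trans_le (hmax (left_mem_Icc.2 hv.2.le))
  have hlt : t₁ < t₀ := ht₁.2.lt_of_ne fun heq ↦ (heq ▸ hft₁).not_ge hneg
  have ht₁pos : 0 < t₁ := hv₀.1.trans_le ht₁.1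
  have hint : IntervalIntegrable (fun s ↦ k (t₀ - s)) volume t₁ t₀ := by
    simpa using ((hki (t₀ - t₁) (sub_pos.2 hlt)).comp_sub_left t₀).symm
  have hle : ∫ s in t₁..t₀, k (t₀ - s) * f s ≤ (∫ s in t₁..t₀, k (t₀ - s)) * f t₁ := by
    rw [← intervalIntegral.integral_mul_const]
    refine intervalIntegral.integral_mono_on_of_le_Ioo hlt.le
      (h.intervalIntegrable_of_le ht₁pos hlt.le).2 (hint.mul_const _) fun s hs ↦ ?_
    exact mul_le_mul_of_nonneg_left (hmax ⟨ht₁.1.trans hs.1.le, hs.2.le⟩)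
      (hkpos _ (sub_pos.2 hs.2)).le
  have : k t₀ * f t₁ < k t₀ * f t₁ := calc
    k t₀ * f t₁ ≤ k t₁ * (f t₀ + ∫ s in t₁..t₀, k (t₀ - s) * f s) :=
      h.mul_le_mul_add_integral hk ht₁pos hlt.le fun s hs ↦ (hf s ⟨hs.1, hs.2.trans hlt⟩).le
    _ ≤ k t₁ * ((∫ s in t₁..t₀, k (t₀ - s)) * f t₁) :=
      mul_le_mul_of_nonneg_left (by linarith) (hkpos t₁ ht₁pos).le
    _ = (k t₁ * ∫ s in t₁..t₀, k (t₀ - s)) * f t₁ := (mul_assoc ..).symm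
    _ < k t₀ * f t₁ :=
      mul_lt_mul_of_pos_right (hsmall ⟨hv.1.trans_le ht₁.1, hlt⟩).1 hft₁
  exact this.false

theorem IsResolvent.pos (h : IsResolvent k f) (hk : AntitoneShiftRatio k)
    (hkpos : ∀ t, 0 < t → 0 < k t) (hkc : ContinuousOn k (Ioi 0))
    (hki : ∀ t, 0 < t → IntervalIntegrable k volume 0 t) (hfc : ContinuousOn f (Ioi 0))
    (hf : ∀ᶠ t in 𝓝[>] 0, 0 < f t) (ht : 0 < t) : 0 < f t := by
  by_contra! hneg
  obtain ⟨u, hu, hfu⟩ := (mem_nhdsGT_iff_exists_mem_Ioc_Ioo_subset ht).1 hf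
  have hclosed : IsClosed (Icc u t ∩ f ⁻¹' Iic 0) :=
    (hfc.mono fun s hs ↦ hu.1.trans_le hs.1).preimage_isClosed_of_isClosed isClosed_Icc isClosed_Iic
  obtain ⟨t₀, ⟨ht₀, hft₀⟩, hmin⟩ :=
    (isCompact_Icc.of_isClosed_subset hclosed inter_subset_left).exists_isLeast
      ⟨t, ⟨hu.2, le_rfl⟩, hneg⟩
  refine (h.pos_of_forall_lt_pos hk hkpos hkc hki hfc (hu.1.trans_le ht₀.1) fun s hs ↦ ?_).not_ge
    hft₀
  rcases lt_or_ge s u with hsu | hus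
  · exact hfu ⟨hs.1, hsu⟩
  · exact not_le.1 fun hfs ↦ hs.2.not_ge (hmin ⟨⟨hus, hs.2.le.trans ht₀.2⟩, hfs⟩)

end Resolvent

section FractionalKernel

/-- The Riemann–Liouville kernel `k_a(t) = t^(a-1) / Γ(a)`; convolution with it is fractional
integration of order `a`. Meaningful for `t > 0` only. -/
noncomputable def fractionalKernel (a t : ℝ) : ℝ := t ^ (a - 1) / Gamma a

variable {a b t : ℝ}

lemma fractionalKernel_one (t : ℝ) : fractionalKernel 1 t = 1 := by
  simp [fractionalKernel]

lemma fractionalKernel_pos (ha : 0 < a) (ht : 0 < t) : 0 < fractionalKernel a t :=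
  div_pos (rpow_pos_of_pos ht _) (Gamma_pos_of_pos ha)

lemma continuousOn_fractionalKernel (a : ℝ) : ContinuousOn (fractionalKernel a) (Ioi 0) :=
  (continuousOn_id.rpow_const fun _ ht ↦ Or.inl (ne_of_gt ht)).div_const _

lemma antitoneOn_fractionalKernel (ha : 0 < a) (ha₁ : a ≤ 1) :
    AntitoneOn (fractionalKernel a) (Ioi 0) := fun _ hs _ _ hst ↦
  div_le_div_of_nonneg_right (rpow_le_rpow_of_nonpos hs hst (by linarith))
    (Gamma_pos_of_pos ha).le

lemma antitoneShiftRatio_fractionalKernel (ha₁ : a ≤ 1) :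
    AntitoneShiftRatio (fractionalKernel a) := by
  intro s t₁ t₀ hs hst ht
  have hst₀ : 0 < t₀ - s := by linarith
  have ht₁ : 0 < t₁ := hs.trans hst
  have hle : t₀ * (t₁ - s) ≤ (t₀ - s) * t₁ := by nlinarith
  have hpow := rpow_le_rpow_of_nonpos (mul_pos (ht₁.trans_le ht) (sub_pos.2 hst)) hle
    (by linarith : a - 1 ≤ 0)
  rw [mul_rpow hst₀.le ht₁.le, mul_rpow (ht₁.trans_le ht).le (sub_pos.2 hst).le] at hpow
  simp only [fractionalKernel, div_mul_div_comm]
  exact div_le_div_of_nonneg_right hpow (mul_self_nonneg _)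

lemma integral_sub_rpow_mul_rpow (ha : 0 < a) (hb : 0 < b) (ht : 0 < t) :
    ∫ s in 0..t, (t - s) ^ (a - 1) * s ^ (b - 1) =
      t ^ (a + b - 1) * (Gamma a * Gamma b / Gamma (a + b)) := by
  have hbeta := Complex.betaIntegral_scaled (b : ℂ) (a : ℂ) ht
  rw [Complex.betaIntegral_eq_Gamma_mul_div _ _ (by simpa) (by simpa)] at hbeta
  have hcast : ∫ s in 0..t, (s : ℂ) ^ ((b : ℂ) - 1) * ((t : ℂ) - s) ^ ((a : ℂ) - 1) =
      ((∫ s in 0..t, (t - s) ^ (a - 1) * s ^ (b - 1) : ℝ) : ℂ) := by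
    rw [← intervalIntegral.integral_ofReal]
    refine intervalIntegral.integral_congr fun s hs ↦ ?_
    rw [uIcc_of_le ht.le] at hs
    simp only [Complex.ofReal_mul, Complex.ofReal_cpow hs.1,
      Complex.ofReal_cpow (sub_nonneg.2 hs.2), Complex.ofReal_sub, Complex.ofReal_one, mul_comm]
  rw [hcast, ← Complex.ofReal_add, Complex.Gamma_ofReal, Complex.Gamma_ofReal,
    Complex.Gamma_ofReal, ← Complex.ofReal_one, ← Complex.ofReal_sub,
    ← Complex.ofReal_cpow ht.le, add_comm b a, mul_comm (Gamma b : ℂ)] at hbeta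
  exact_mod_cast hbeta

lemma integral_fractionalKernel_conv (ha : 0 < a) (hb : 0 < b) (ht : 0 < t) :
    ∫ s in 0..t, fractionalKernel a (t - s) * fractionalKernel b s =
      fractionalKernel (a + b) t := by
  have hΓa := (Gamma_pos_of_pos ha).ne'
  have hΓb := (Gamma_pos_of_pos hb).ne'
  simp only [fractionalKernel, div_mul_div_comm]
  rw [intervalIntegral.integral_div, integral_sub_rpow_mul_rpow ha hb ht]
  field_simp

lemma intervalIntegrable_fractionalKernel_conv (ha : 0 < a) (hb : 0 < b) (ht : 0 < t) :
    IntervalIntegrable (fun s ↦ fractionalKernel a (t - s) * fractionalKernel b s) volume 0 t := by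
  by_contra hnot
  have hconv := integral_fractionalKernel_conv ha hb ht
  rw [intervalIntegral.integral_undef hnot] at hconv
  exact (fractionalKernel_pos (add_pos ha hb) ht).ne hconv

end FractionalKernel

section MittagLeffler

/-- The two-parameter Mittag-Leffler function `E_{β,c}(x) = ∑_{k≥0} x^k / Γ(c+βk)`. -/
noncomputable def mittagLeffler₂ (β c x : ℝ) : ℝ := ∑' k : ℕ, x ^ k / Gamma (c + β * k)

/-- The function `e_c(t) = t^(c-1) E_{β,c}(-t^β)`, an alternating series of Riemann–Liouville
kernels. Meaningful for `t > 0` only. -/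
noncomputable def mittagLefflerKernel (β c t : ℝ) : ℝ :=
  t ^ (c - 1) * mittagLeffler₂ β c (-t ^ β)

lemma rpow_sub_one_mul_exp_neg_le_Gamma {A s : ℝ} (hA : 0 ≤ A) (hs : 1 ≤ s) :
    A ^ (s - 1) * exp (-A) ≤ Gamma s := by
  have hs₀ : 0 < s := one_pos.trans_le hs
  have hsub : Ioi A ⊆ Ioi 0 := Ioi_subset_Ioi hA
  have hint := GammaIntegral_convergent hs₀
  calc A ^ (s - 1) * exp (-A) = ∫ y in Ioi A, exp (-y) * A ^ (s - 1) := by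
        rw [integral_mul_const, integral_exp_neg_Ioi, mul_comm]
    _ ≤ ∫ y in Ioi A, exp (-y) * y ^ (s - 1) := by
        refine setIntegral_mono_on ((integrableOn_exp_neg_Ioi A).mul_const _)
          (hint.mono_set hsub) measurableSet_Ioi fun y hy ↦ ?_
        have hAy : A ≤ y := (mem_Ioi.1 hy).le
        gcongr
    _ ≤ ∫ y in Ioi 0, exp (-y) * y ^ (s - 1) := by
        refine setIntegral_mono_set hint ?_ hsub.eventuallyLE
        filter_upwards [ae_restrict_mem measurableSet_Ioi] with y hy
        exact mul_nonneg (exp_pos _).le (rpow_nonneg (mem_Ioi.1 hy).le _)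
    _ = Gamma s := (Gamma_eq_integral hs₀).symm

variable {β c t : ℝ}

lemma summable_pow_div_Gamma (hβ : 0 < β) (c x : ℝ) :
    Summable fun k : ℕ ↦ x ^ k / Gamma (c + β * k) := by
  -- With `A ^ β = |x| + 1`, the Gamma bound makes the terms `O((|x| / (|x| + 1)) ^ k)`.
  obtain ⟨A, hA, hAβ⟩ : ∃ A : ℝ, 0 < A ∧ A ^ β = |x| + 1 :=
    ⟨(|x| + 1) ^ β⁻¹, by positivity, rpow_inv_rpow (by positivity) hβ.ne'⟩
  have hgeom : Summable fun k : ℕ ↦ (A ^ (c - 1) * exp (-A))⁻¹ * (|x| / (|x| + 1)) ^ k :=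
    (summable_geometric_of_lt_one (by positivity)
      ((div_lt_one (by positivity)).2 (lt_add_one _))).mul_left _
  have hlarge : ∀ᶠ k : ℕ in atTop, 1 ≤ c + β * k :=
    (tendsto_atTop_add_const_left _ c
      (tendsto_natCast_atTop_atTop.const_mul_atTop hβ)).eventually_ge_atTop 1
  refine hgeom.of_norm_bounded_eventually_nat ?_
  filter_upwards [hlarge] with k hk
  have hpow : A ^ (c + β * k - 1) = A ^ (c - 1) * (|x| + 1) ^ k := by
    rw [← hAβ, ← rpow_natCast, ← rpow_mul hA.le, ← rpow_add hA]
    ring_nf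
  have hΓ := rpow_sub_one_mul_exp_neg_le_Gamma hA.le hk
  rw [hpow] at hΓ
  rw [norm_div, norm_pow, norm_eq_abs, norm_of_nonneg (Gamma_pos_of_pos (one_pos.trans_le hk)).le]
  calc |x| ^ k / Gamma (c + β * k)
      ≤ |x| ^ k / (A ^ (c - 1) * (|x| + 1) ^ k * exp (-A)) := by gcongr
    _ = (A ^ (c - 1) * exp (-A))⁻¹ * (|x| / (|x| + 1)) ^ k := by
        rw [div_pow]
        field_simp

lemma mittagLeffler₂_eq_add_mul (hβ : 0 < β) (c x : ℝ) :
    mittagLeffler₂ β c x = 1 / Gamma c + x * mittagLeffler₂ β (c + β) x := by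
  have hshift (k : ℕ) : x ^ (k + 1) / Gamma (c + β * (k + 1 : ℕ)) =
      x * (x ^ k / Gamma (c + β + β * k)) := by
    rw [show c + β * (k + 1 : ℕ) = c + β + β * k by push_cast; ring, pow_succ', mul_div_assoc]
  simp only [mittagLeffler₂, (summable_pow_div_Gamma hβ c x).tsum_eq_zero_add, hshift,
    tsum_mul_left, pow_zero, Nat.cast_zero, mul_zero, add_zero]

lemma continuous_mittagLeffler₂ (hβ : 0 < β) (c : ℝ) : Continuous (mittagLeffler₂ β c) := by
  refine continuous_iff_continuousAt.2 fun x ↦ ?_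
  have hcont : ContinuousOn (mittagLeffler₂ β c) (Metric.ball 0 (|x| + 1)) := by
    refine continuousOn_tsum (fun k ↦ by fun_prop)
      (summable_pow_div_Gamma hβ c (|x| + 1)).norm fun k y hy ↦ ?_
    have hy' : |y| ≤ |x| + 1 := (mem_ball_zero_iff.1 hy).le
    rw [norm_div, norm_div, norm_pow, norm_pow, norm_of_nonneg (by positivity : 0 ≤ |x| + 1)]
    gcongr
    exact hy'
  exact hcont.continuousAt (Metric.isOpen_ball.mem_nhds (by simp))

lemma continuous_mittagLeffler₂_neg_rpow (hβ : 0 < β) (c : ℝ) :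
    Continuous fun t : ℝ ↦ mittagLeffler₂ β c (-t ^ β) :=
  (continuous_mittagLeffler₂ hβ c).comp (continuous_rpow_const hβ.le).neg

lemma mittagLefflerKernel_one (β t : ℝ) : mittagLefflerKernel β 1 t = mittagLeffler β (-t ^ β) := by
  simp only [mittagLefflerKernel, mittagLeffler₂, mittagLeffler, sub_self, rpow_zero, one_mul]

lemma hasSum_mittagLefflerKernel (hβ : 0 < β) (c : ℝ) (ht : 0 < t) :
    HasSum (fun k : ℕ ↦ (-1) ^ k * fractionalKernel (c + β * k) t) (mittagLefflerKernel β c t) := by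
  refine ((summable_pow_div_Gamma hβ c (-t ^ β)).hasSum.mul_left (t ^ (c - 1))).congr_fun
    fun k ↦ ?_
  have hpow : t ^ (c + β * k - 1) = t ^ (c - 1) * (t ^ β) ^ k := by
    rw [← rpow_natCast, ← rpow_mul ht.le, ← rpow_add ht]
    ring_nf
  rw [fractionalKernel, hpow, neg_pow (t ^ β)]
  ring

lemma mittagLefflerKernel_eq_sub (hβ : 0 < β) (c : ℝ) (ht : 0 < t) :
    mittagLefflerKernel β c t = fractionalKernel c t - mittagLefflerKernel β (c + β) t := by
  have hpow : t ^ (c + β - 1) = t ^ (c - 1) * t ^ β := by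
    rw [← rpow_add ht]
    ring_nf
  rw [mittagLefflerKernel, mittagLefflerKernel, mittagLeffler₂_eq_add_mul hβ, hpow,
    fractionalKernel]
  ring

lemma continuousOn_mittagLefflerKernel (hβ : 0 < β) (c : ℝ) :
    ContinuousOn (mittagLefflerKernel β c) (Ioi 0) :=
  (continuousOn_id.rpow_const fun _ ht ↦ Or.inl (ne_of_gt ht)).mul
    (continuous_mittagLeffler₂_neg_rpow hβ c).continuousOn

lemma eventually_mittagLefflerKernel_pos (hβ : 0 < β) (hc : 0 < c) :
    ∀ᶠ t in 𝓝[>] 0, 0 < mittagLefflerKernel β c t := by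
  have hzero : 0 < mittagLeffler₂ β c (-0 ^ β) := by
    rw [zero_rpow hβ.ne', neg_zero, mittagLeffler₂_eq_add_mul hβ, zero_mul, add_zero]
    exact one_div_pos.2 (Gamma_pos_of_pos hc)
  have hnear := (continuous_mittagLeffler₂_neg_rpow hβ c).continuousAt.eventually
    (lt_mem_nhds hzero)
  filter_upwards [nhdsWithin_le_nhds hnear, self_mem_nhdsWithin] with t hpos ht
  exact mul_pos (rpow_pos_of_pos ht _) hpos

variable {a : ℝ}

lemma intervalIntegrable_fractionalKernel_mul_mittagLefflerKernel (hβ : 0 < β) (ha : 0 < a)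
    (hc : 0 < c) (ht : 0 < t) :
    IntervalIntegrable (fun s ↦ fractionalKernel a (t - s) * mittagLefflerKernel β c s)
      volume 0 t := by
  have hint := ((intervalIntegrable_fractionalKernel_conv ha hc ht).const_mul
    (Gamma c)).mul_continuousOn (continuous_mittagLeffler₂_neg_rpow hβ c).continuousOn
  refine hint.congr fun s _ ↦ ?_
  have hΓ := (Gamma_pos_of_pos hc).ne'
  simp only [mittagLefflerKernel, fractionalKernel]
  field_simp

lemma integral_fractionalKernel_mul_mittagLefflerKernel (hβ : 0 < β) (ha : 0 < a) (hc : 0 < c)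
    (ht : 0 < t) :
    ∫ s in 0..t, fractionalKernel a (t - s) * mittagLefflerKernel β c s =
      mittagLefflerKernel β (a + c) t := by
  let F (k : ℕ) (s : ℝ) : ℝ :=
    (-1) ^ k * (fractionalKernel a (t - s) * fractionalKernel (c + β * k) s)
  have hck (k : ℕ) : 0 < c + β * k := by positivity
  have hF_int (k : ℕ) : Integrable (F k) (volume.restrict (Ioo 0 t)) :=
    ((intervalIntegrable_iff_integrableOn_Ioo_of_le ht.le).1
      (intervalIntegrable_fractionalKernel_conv ha (hck k) ht)).const_mul _
  have hconv (k : ℕ) : ∫ s in Ioo 0 t, fractionalKernel a (t - s) * fractionalKernel (c + β * k) s =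
      fractionalKernel (a + c + β * k) t := by
    rw [← integral_Ioc_eq_integral_Ioo, ← intervalIntegral.integral_of_le ht.le,
      integral_fractionalKernel_conv ha (hck k) ht, add_assoc]
  have hF_norm (k : ℕ) : ∫ s in Ioo 0 t, ‖F k s‖ =
      ‖(-1) ^ k * fractionalKernel (a + c + β * k) t‖ := by
    rw [norm_mul, norm_pow, norm_neg, norm_one, one_pow, one_mul,
      norm_of_nonneg (fractionalKernel_pos (by positivity) ht).le, ← hconv]
    refine setIntegral_congr_fun measurableSet_Ioo fun s hs ↦ ?_
    simp only [F, norm_mul, norm_pow, norm_neg, norm_one, one_pow, one_mul,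
      norm_of_nonneg (fractionalKernel_pos ha (sub_pos.2 hs.2)).le,
      norm_of_nonneg (fractionalKernel_pos (hck k) hs.1).le]
  have hsum := hasSum_integral_of_summable_integral_norm hF_int (by
    simpa only [hF_norm] using (hasSum_mittagLefflerKernel hβ (a + c) ht).summable.norm)
  simp only [F, integral_const_mul, hconv] at hsum
  rw [(hasSum_mittagLefflerKernel hβ (a + c) ht).unique hsum,
    intervalIntegral.integral_of_le ht.le, integral_Ioc_eq_integral_Ioo]
  refine setIntegral_congr_fun measurableSet_Ioo fun s hs ↦ ?_
  simp only [← (hasSum_mittagLefflerKernel hβ c hs.1).tsum_eq, ← tsum_mul_left, mul_left_comm]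

lemma isResolvent_mittagLefflerKernel (hβ : 0 < β) :
    IsResolvent (fractionalKernel β) (mittagLefflerKernel β β) where
  intervalIntegrable _ ht := intervalIntegrable_fractionalKernel_mul_mittagLefflerKernel hβ hβ hβ ht
  eq_sub_integral _ ht := by
    rw [integral_fractionalKernel_mul_mittagLefflerKernel hβ hβ hβ ht]
    exact mittagLefflerKernel_eq_sub hβ β ht

theorem mittagLefflerKernel_self_pos (hβ : 0 < β) (hβ₁ : β ≤ 1) (ht : 0 < t) :
    0 < mittagLefflerKernel β β t :=
  (isResolvent_mittagLefflerKernel hβ).pos (antitoneShiftRatio_fractionalKernel hβ₁)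
    (fun _ ↦ fractionalKernel_pos hβ) (continuousOn_fractionalKernel β)
    (fun _ ht ↦ by
      simpa only [fractionalKernel_one, one_mul] using
        intervalIntegrable_fractionalKernel_conv one_pos hβ ht)
    (continuousOn_mittagLefflerKernel hβ β) (eventually_mittagLefflerKernel_pos hβ hβ) ht

lemma intervalIntegrable_mittagLefflerKernel (hβ : 0 < β) (hc : 0 < c) (ht : 0 < t) :
    IntervalIntegrable (mittagLefflerKernel β c) volume 0 t := by
  simpa only [fractionalKernel_one, one_mul] using
    intervalIntegrable_fractionalKernel_mul_mittagLefflerKernel hβ one_pos hc ht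

lemma integral_mittagLefflerKernel_self (hβ : 0 < β) (ht : 0 < t) :
    ∫ s in 0..t, mittagLefflerKernel β β s = 1 - mittagLefflerKernel β 1 t := by
  have hconv := integral_fractionalKernel_mul_mittagLefflerKernel hβ one_pos hβ ht
  simp only [fractionalKernel_one, one_mul] at hconv
  rw [hconv, mittagLefflerKernel_eq_sub hβ 1 ht, fractionalKernel_one, sub_sub_cancel]

lemma antitoneOn_mittagLefflerKernel_one (hβ : 0 < β) (hβ₁ : β ≤ 1) :
    AntitoneOn (mittagLefflerKernel β 1) (Ioi 0) := by
  intro s hs t ht hst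
  rw [← sub_le_sub_iff_left 1, ← integral_mittagLefflerKernel_self hβ hs,
    ← integral_mittagLefflerKernel_self hβ ht]
  refine intervalIntegral.integral_mono_interval le_rfl (mem_Ioi.1 hs).le hst ?_
    (intervalIntegrable_mittagLefflerKernel hβ hβ ht)
  filter_upwards [ae_restrict_mem measurableSet_Ioc] with r hr
  exact (mittagLefflerKernel_self_pos hβ hβ₁ hr.1).le

lemma fractionalKernel_mul_one_sub_le (hβ : 0 < β) (hβ₁ : β < 1) (ht : 0 < t) :
    fractionalKernel (1 - β) t * (1 - mittagLefflerKernel β 1 t) ≤ mittagLefflerKernel β 1 t := by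
  have hα : 0 < 1 - β := sub_pos.2 hβ₁
  calc fractionalKernel (1 - β) t * (1 - mittagLefflerKernel β 1 t)
      = ∫ s in 0..t, fractionalKernel (1 - β) t * mittagLefflerKernel β β s := by
        rw [intervalIntegral.integral_const_mul, integral_mittagLefflerKernel_self hβ ht]
    _ ≤ ∫ s in 0..t, fractionalKernel (1 - β) (t - s) * mittagLefflerKernel β β s := by
        refine intervalIntegral.integral_mono_on_of_le_Ioo ht.le
          ((intervalIntegrable_mittagLefflerKernel hβ hβ ht).const_mul _)
          (intervalIntegrable_fractionalKernel_mul_mittagLefflerKernel hβ hα hβ ht) fun s hs ↦ ?_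
        exact mul_le_mul_of_nonneg_right
          (antitoneOn_fractionalKernel hα (by linarith) (sub_pos.2 hs.2) ht (by linarith [hs.1]))
          (mittagLefflerKernel_self_pos hβ hβ₁.le hs.1).le
    _ = mittagLefflerKernel β 1 t := by
        rw [integral_fractionalKernel_mul_mittagLefflerKernel hβ hα hβ ht, sub_add_cancel]

lemma fractionalKernel_mul_le_one_sub (hβ : 0 < β) (hβ₁ : β ≤ 1) (ht : 0 < t) :
    fractionalKernel (1 + β) t * mittagLefflerKernel β 1 t ≤ 1 - mittagLefflerKernel β 1 t := by
  have hconv := integral_fractionalKernel_conv hβ one_pos ht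
  have hint := intervalIntegrable_fractionalKernel_conv hβ one_pos ht
  simp only [fractionalKernel_one, mul_one] at hconv hint
  calc fractionalKernel (1 + β) t * mittagLefflerKernel β 1 t
      = ∫ s in 0..t, fractionalKernel β (t - s) * mittagLefflerKernel β 1 t := by
        rw [intervalIntegral.integral_mul_const, hconv, add_comm]
    _ ≤ ∫ s in 0..t, fractionalKernel β (t - s) * mittagLefflerKernel β 1 s := by
        refine intervalIntegral.integral_mono_on_of_le_Ioo ht.le (hint.mul_const _)
          (intervalIntegrable_fractionalKernel_mul_mittagLefflerKernel hβ hβ one_pos ht)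
          fun s hs ↦ ?_
        exact mul_le_mul_of_nonneg_left
          (antitoneOn_mittagLefflerKernel_one hβ hβ₁ hs.1 ht hs.2.le)
          (fractionalKernel_pos hβ (sub_pos.2 hs.2)).le
    _ = 1 - mittagLefflerKernel β 1 t := by
        rw [integral_fractionalKernel_mul_mittagLefflerKernel hβ hβ one_pos ht,
          mittagLefflerKernel_eq_sub hβ 1 ht, fractionalKernel_one, sub_sub_cancel, add_comm]

theorem le_mittagLeffler_neg_rpow (hβ : 0 < β) (hβ₁ : β < 1) (ht : 0 < t) :
    1 / (1 + Gamma (1 - β) * t ^ β) ≤ mittagLeffler β (-t ^ β) := by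
  have : 0 < Gamma (1 - β) := Gamma_pos_of_pos (sub_pos.2 hβ₁)
  have hkernel : fractionalKernel (1 - β) t = (Gamma (1 - β) * t ^ β)⁻¹ := by
    rw [fractionalKernel, sub_sub_cancel_left, rpow_neg ht.le, mul_inv_rev, div_eq_mul_inv]
  have hle := fractionalKernel_mul_one_sub_le hβ hβ₁ ht
  rw [mittagLefflerKernel_one, hkernel, inv_mul_le_iff₀ (by positivity)] at hle
  rw [div_le_iff₀ (by positivity)]
  linarith

theorem mittagLeffler_neg_rpow_le (hβ : 0 < β) (hβ₁ : β ≤ 1) (ht : 0 < t) :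
    mittagLeffler β (-t ^ β) ≤ 1 / (1 + t ^ β / Gamma (1 + β)) := by
  have : 0 < Gamma (1 + β) := Gamma_pos_of_pos (by positivity)
  have hle := fractionalKernel_mul_le_one_sub hβ hβ₁ ht
  rw [mittagLefflerKernel_one, fractionalKernel, add_sub_cancel_left] at hle
  rw [le_div_iff₀ (by positivity)]
  linarith

end MittagLeffler

theorem mittagLeffler_bounds (β : ℝ) (hβ0 : 0 < β) (hβ1 : β < 1) (x : ℝ) (hx : 0 < x) :
    1 / (1 + Real.Gamma (1 - β) * x) ≤ mittagLeffler β (-x) ∧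
      mittagLeffler β (-x) ≤ 1 / (1 + x / Real.Gamma (1 + β)) := by
  obtain ⟨t, ht, rfl⟩ : ∃ t : ℝ, 0 < t ∧ t ^ β = x :=
    ⟨x ^ β⁻¹, rpow_pos_of_pos hx _, rpow_inv_rpow hx.le hβ0.ne'⟩
  exact ⟨le_mittagLeffler_neg_rpow hβ0 hβ1 ht, mittagLeffler_neg_rpow_le hβ0 hβ1.le ht⟩
end

section
/- The function x ↦ E_β(-x) is (strictly) decreasing on (0,∞). -/
open MeasureTheory Real Set

/-!
Euler's limit `1 / Γ(1 + s) = lim n ^ (-s) * ∏ j ∈ [1, n], (1 + s / j)`, inserted in every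
coefficient, exhibits `E_β(x)` as the limit of the values at `r = x / n ^ β` of the power series
with coefficients `∏ j ∈ [1, n], (1 + β * k / j)`. For `β ≤ 1` these coefficients are nonnegative
combinations of the binomials `(k + m).choose m`, whose generating functions `1 / (1 - r) ^ (m + 1)`
increase on `(-1, 1)`. Hence `E_β` is monotone on the whole line, and strictly so because it is
analytic and not constant.
-/

open Filter Topology
open scoped NNReal

lemma strictMono_of_monotone_of_analyticOnNhd {f : ℝ → ℝ} (hf : Monotone f)
    (hf_analytic : AnalyticOnNhd ℝ f univ) {a b : ℝ} (hab : f a ≠ f b) : StrictMono f := by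
  intro x y hxy
  refine (hf hxy.le).lt_of_ne fun hfxy => hab ?_
  obtain ⟨z, hxz, hzy⟩ := exists_between hxy
  have locally_const : f =ᶠ[𝓝 z] fun _ => f x := by
    filter_upwards [Ioo_mem_nhds hxz hzy] with w hw
    exact ((hf hw.2.le).trans_eq hfxy.symm).antisymm (hf hw.1.le)
  have const := hf_analytic.eq_of_eventuallyEq analyticOnNhd_const locally_const
  exact (congrFun const a).trans (congrFun const b).symm

section EulerProd

/-- The `n`-th partial product of Euler's product for the Gamma function, normalized so that
`eulerProd n s / n ^ s` tends to `1 / Γ(1 + s)`. -/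
noncomputable def eulerProd (n : ℕ) (s : ℝ) : ℝ := ∏ j ∈ Finset.range n, (1 + s / (j + 1))

variable {s : ℝ}

lemma eulerProd_zero (s : ℝ) : eulerProd 0 s = 1 := Finset.prod_range_zero _

lemma eulerProd_succ (n : ℕ) (s : ℝ) :
    eulerProd (n + 1) s = eulerProd n s * (1 + s / (n + 1)) :=
  Finset.prod_range_succ _ n

lemma eulerProd_nonneg (n : ℕ) (hs : 0 ≤ s) : 0 ≤ eulerProd n s :=
  Finset.prod_nonneg fun j _ => by positivity

lemma prod_range_succ_add_eq_eulerProd (n : ℕ) (s : ℝ) :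
    ∏ j ∈ Finset.range (n + 1), (s + j) = s * (n.factorial * eulerProd n s) := by
  induction n with
  | zero => simp [eulerProd_zero]
  | succ n ih =>
    rw [Finset.prod_range_succ, ih, eulerProd_succ, Nat.factorial_succ]
    push_cast
    field_simp
    ring

lemma tendsto_eulerProd_div_rpow (hs : -1 < s) :
    Tendsto (fun n : ℕ => eulerProd n s / (n : ℝ) ^ s) atTop (𝓝 (Gamma (1 + s))⁻¹) := by
  rcases eq_or_ne s 0 with rfl | hs0
  · simp [eulerProd]
  have Gamma_ne_zero : s * Gamma s ≠ 0 := by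
    rw [← Gamma_add_one hs0]
    exact (Gamma_pos_of_pos (by linarith)).ne'
  rw [add_comm, Gamma_add_one hs0]
  refine (((GammaSeq_tendsto_Gamma s).const_mul s).inv₀ Gamma_ne_zero).congr fun n => ?_
  rw [GammaSeq, prod_range_succ_add_eq_eulerProd]
  have := n.factorial_ne_zero
  field_simp

lemma one_add_div_succ_le_rpow (hs : 0 ≤ s) {n : ℕ} (hn : 1 ≤ n) :
    1 + s / (n + 1) ≤ (((n + 1 : ℕ) : ℝ) / n) ^ s := by
  have : (0 : ℝ) < n := by exact_mod_cast hn
  have hlog : 1 / ((n : ℝ) + 1) ≤ log (((n + 1 : ℕ) : ℝ) / n) := by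
    convert one_sub_inv_le_log_of_pos (x := ((n + 1 : ℕ) : ℝ) / n) (by positivity) using 1
    push_cast
    field_simp
    ring
  calc 1 + s / (n + 1) = 1 / ((n : ℝ) + 1) * s + 1 := by ring
    _ ≤ exp (1 / ((n : ℝ) + 1) * s) := add_one_le_exp _
    _ ≤ exp (log (((n + 1 : ℕ) : ℝ) / n) * s) := by gcongr
    _ = (((n + 1 : ℕ) : ℝ) / n) ^ s := (rpow_def_of_pos (by positivity) s).symm

lemma antitoneOn_eulerProd_div_rpow (hs : 0 ≤ s) :
    AntitoneOn (fun n : ℕ => eulerProd n s / (n : ℝ) ^ s) (Ici 1) := by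
  refine antitoneOn_nat_Ici_of_succ_le fun n hn => ?_
  have hn0 : (0 : ℝ) < n := by exact_mod_cast hn
  have hratio := one_add_div_succ_le_rpow hs hn
  rw [div_rpow (by positivity) hn0.le] at hratio
  calc eulerProd (n + 1) s / ((n + 1 : ℕ) : ℝ) ^ s
      = eulerProd n s * (1 + s / (n + 1)) / ((n + 1 : ℕ) : ℝ) ^ s := by rw [eulerProd_succ]
    _ ≤ eulerProd n s * (((n + 1 : ℕ) : ℝ) ^ s / (n : ℝ) ^ s) / ((n + 1 : ℕ) : ℝ) ^ s := by
        gcongr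
        exact eulerProd_nonneg n hs
    _ = eulerProd n s / (n : ℝ) ^ s := by field_simp

lemma summable_norm_eulerProd_mul_geometric (β : ℝ) (n : ℕ) {r : ℝ} (hr : ‖r‖ < 1) :
    Summable fun k : ℕ => ‖eulerProd n (β * k) * r ^ k‖ := by
  have factor_isBigO (j : ℕ) :
      (fun k : ℕ => 1 + β * k / (j + 1)) =O[atTop] fun k : ℕ => (k : ℝ) := by
    have one_isBigO : (fun _ : ℕ => (1 : ℝ)) =O[atTop] fun k : ℕ => (k : ℝ) :=
      (Asymptotics.isLittleO_const_left.mpr <| .inr <|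
        tendsto_norm_atTop_atTop.comp tendsto_natCast_atTop_atTop).isBigO
    refine one_isBigO.add ?_
    simpa only [mul_div_right_comm] using
      (Asymptotics.isBigO_refl _ _).const_mul_left (β / (j + 1))
  have prod_isBigO :
      (fun k : ℕ => eulerProd n (β * k)) =O[atTop] fun k : ℕ => ((k ^ n : ℕ) : ℝ) := by
    simpa [eulerProd] using
      Asymptotics.IsBigO.finsetProd (s := Finset.range n) fun j _ => factor_isBigO j
  exact summable_norm_mul_geometric_of_norm_lt_one' hr prod_isBigO

end EulerProd

section BinomialCone

/-- The convex cone of the sequences `k ↦ ∑ m ≤ n, p m * (k + m).choose m` with `0 ≤ p m`, that is,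
of the coefficients of the nonnegative combinations of the functions `1 / (1 - r) ^ (m + 1)` with
`m ≤ n`. -/
def binomialCone (n : ℕ) : Submodule ℝ≥0 (ℕ → ℝ) :=
  Submodule.span ℝ≥0 ((fun m k : ℕ => ((k + m).choose m : ℝ)) '' Iic n)

variable {n : ℕ} {a : ℕ → ℝ}

lemma choose_mem_binomialCone {m : ℕ} (hm : m ≤ n) :
    (fun k : ℕ => ((k + m).choose m : ℝ)) ∈ binomialCone n :=
  Submodule.subset_span ⟨m, hm, rfl⟩

lemma one_add_mul_choose (t : ℝ) (k m : ℕ) :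
    (1 + t * k) * ((k + m).choose m : ℝ) = (1 - t * (m + 1)) * ((k + m).choose m : ℝ) +
      t * (m + 1) * ((k + (m + 1)).choose (m + 1) : ℝ) := by
  have absorption : ((k : ℝ) + m + 1) * ((k + m).choose m : ℝ) =
      ((k + (m + 1)).choose (m + 1) : ℝ) * (m + 1) := by
    exact_mod_cast Nat.add_one_mul_choose_eq (k + m) m
  linear_combination t * absorption

lemma one_add_mul_mem_binomialCone_succ {t : ℝ} (ht0 : 0 ≤ t) (ht1 : t * (n + 1) ≤ 1)
    (ha : a ∈ binomialCone n) : (fun k : ℕ => (1 + t * k) * a k) ∈ binomialCone (n + 1) := by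
  induction ha using Submodule.span_induction with
  | mem _ hx =>
    obtain ⟨m, hm, rfl⟩ := hx
    have hm' : (m : ℝ) ≤ n := by exact_mod_cast hm
    have hcoeff : 0 ≤ 1 - t * (m + 1) := by nlinarith
    have hmem := (binomialCone (n + 1)).add_mem
      (Submodule.smul_mem _ (NNReal.mk _ hcoeff)
        (choose_mem_binomialCone (Nat.le_succ_of_le hm)))
      (Submodule.smul_mem _ (NNReal.mk (t * (m + 1)) (by positivity))
        (choose_mem_binomialCone (Nat.succ_le_succ hm)))
    convert hmem using 1
    funext k
    exact one_add_mul_choose t k m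
  | zero => simpa only [Pi.zero_apply, mul_zero] using! (binomialCone (n + 1)).zero_mem
  | add x y _ _ hx hy => simpa only [Pi.add_apply, mul_add] using! add_mem hx hy
  | smul c x _ hx =>
    simpa only [Pi.smul_apply, mul_smul_comm] using! Submodule.smul_mem _ c hx

lemma eulerProd_mem_binomialCone {β : ℝ} (hβ0 : 0 ≤ β) (hβ1 : β ≤ 1) (n : ℕ) :
    (fun k : ℕ => eulerProd n (β * k)) ∈ binomialCone n := by
  induction n with
  | zero => simpa [eulerProd_zero] using choose_mem_binomialCone (le_refl 0)
  | succ n ih =>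
    have hstep := one_add_mul_mem_binomialCone_succ (t := β / (n + 1)) (by positivity)
      (by rwa [div_mul_cancel₀ _ (by positivity)]) ih
    convert hstep using 2 with k
    rw [eulerProd_succ]
    ring

lemma summable_mul_geometric_of_mem_binomialCone (ha : a ∈ binomialCone n) {r : ℝ}
    (hr : ‖r‖ < 1) : Summable fun k : ℕ => a k * r ^ k := by
  induction ha using Submodule.span_induction with
  | mem _ hx =>
    obtain ⟨m, -, rfl⟩ := hx
    exact summable_choose_mul_geometric_of_norm_lt_one m hr
  | zero => simp
  | add x y _ _ hx hy => simpa only [Pi.add_apply, add_mul] using hx.add hy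
  | smul c x _ hx => simpa only [Pi.smul_apply, smul_mul_assoc] using hx.const_smul c

lemma monotoneOn_tsum_of_mem_binomialCone (ha : a ∈ binomialCone n) :
    MonotoneOn (fun r : ℝ => ∑' k : ℕ, a k * r ^ k) (Ioo (-1) 1) := by
  intro r hr r' hr' hrr'
  have hr_norm : ‖r‖ < 1 := abs_lt.mpr hr
  have hr'_norm : ‖r'‖ < 1 := abs_lt.mpr hr'
  dsimp only
  induction ha using Submodule.span_induction with
  | mem _ hx =>
    obtain ⟨m, -, rfl⟩ := hx
    rw [tsum_choose_mul_geometric_of_norm_lt_one m hr_norm,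
      tsum_choose_mul_geometric_of_norm_lt_one m hr'_norm]
    have : 0 < 1 - r' := sub_pos.mpr hr'.2
    gcongr
  | zero => simp
  | add x y hx_mem hy_mem hx hy =>
    have hsum {u : ℝ} (hu : ‖u‖ < 1) :=
      (summable_mul_geometric_of_mem_binomialCone hx_mem hu).tsum_add
        (summable_mul_geometric_of_mem_binomialCone hy_mem hu)
    simp only [Pi.add_apply, add_mul]
    rw [hsum hr_norm, hsum hr'_norm]
    exact add_le_add hx hy
  | smul c x _ hx =>
    simp only [Pi.smul_apply, NNReal.smul_def, smul_eq_mul, mul_assoc, tsum_mul_left]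
    exact mul_le_mul_of_nonneg_left hx c.2

end BinomialCone

section MittagLeffler

variable {β : ℝ}

lemma eulerProd_mul_div_rpow_pow (β x : ℝ) (n k : ℕ) :
    eulerProd n (β * k) * (x / (n : ℝ) ^ β) ^ k =
      eulerProd n (β * k) / (n : ℝ) ^ (β * k) * x ^ k := by
  rw [rpow_mul (Nat.cast_nonneg n), rpow_natCast, div_pow]
  ring

lemma tendsto_eulerProd_mul_div_rpow_pow (hβ : 0 ≤ β) (x : ℝ) (k : ℕ) :
    Tendsto (fun n : ℕ => eulerProd n (β * k) * (x / (n : ℝ) ^ β) ^ k) atTop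
      (𝓝 (x ^ k / Gamma (1 + β * k))) := by
  have hs : -1 < β * k := neg_one_lt_zero.trans_le (by positivity)
  simpa only [eulerProd_mul_div_rpow_pow, div_eq_inv_mul (x ^ k)] using
    (tendsto_eulerProd_div_rpow hs).mul_const (x ^ k)

lemma antitoneOn_norm_eulerProd_mul_div_rpow_pow (hβ : 0 ≤ β) (x : ℝ) (k : ℕ) :
    AntitoneOn (fun n : ℕ => ‖eulerProd n (β * k) * (x / (n : ℝ) ^ β) ^ k‖) (Ici 1) := by
  intro m hm n hn hmn
  have hs : 0 ≤ β * k := by positivity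
  have hnonneg (i : ℕ) : 0 ≤ eulerProd i (β * k) / (i : ℝ) ^ (β * k) :=
    div_nonneg (eulerProd_nonneg i hs) (by positivity)
  simp only [eulerProd_mul_div_rpow_pow, norm_mul, norm_of_nonneg (hnonneg _)]
  exact mul_le_mul_of_nonneg_right (antitoneOn_eulerProd_div_rpow hs hm hn hmn) (norm_nonneg _)

lemma eventually_norm_div_natCast_rpow_lt_one (hβ : 0 < β) (x : ℝ) :
    ∀ᶠ n : ℕ in atTop, ‖x / (n : ℝ) ^ β‖ < 1 := by
  have hlim : Tendsto (fun n : ℕ => x / (n : ℝ) ^ β) atTop (𝓝 0) :=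
    ((tendsto_rpow_atTop hβ).comp tendsto_natCast_atTop_atTop).const_div_atTop x
  exact hlim.norm.eventually_lt_const (by simp)

lemma exists_summable_bound_eulerProd_mul_div_rpow_pow (hβ : 0 < β) (x : ℝ) :
    ∃ B : ℕ → ℝ, Summable B ∧ ∀ᶠ n : ℕ in atTop, ∀ k : ℕ,
      ‖eulerProd n (β * k) * (x / (n : ℝ) ^ β) ^ k‖ ≤ B k := by
  obtain ⟨N, hN_lt, hN⟩ :=
    ((eventually_norm_div_natCast_rpow_lt_one hβ x).and (eventually_ge_atTop 1)).exists
  refine ⟨_, summable_norm_eulerProd_mul_geometric β N hN_lt, ?_⟩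
  filter_upwards [eventually_ge_atTop N] with n hn k
  exact antitoneOn_norm_eulerProd_mul_div_rpow_pow hβ.le x k hN (hN.trans hn) hn

lemma summable_norm_pow_div_Gamma (hβ : 0 < β) (x : ℝ) :
    Summable fun k : ℕ => ‖x ^ k / Gamma (1 + β * k)‖ := by
  obtain ⟨B, hB, hbound⟩ := exists_summable_bound_eulerProd_mul_div_rpow_pow hβ x
  refine hB.of_nonneg_of_le (fun _ => norm_nonneg _) fun k => ?_
  exact le_of_tendsto (tendsto_eulerProd_mul_div_rpow_pow hβ.le x k).norm
    (hbound.mono fun n hn => hn k)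

lemma tendsto_tsum_eulerProd_mittagLeffler (hβ : 0 < β) (x : ℝ) :
    Tendsto (fun n : ℕ => ∑' k : ℕ, eulerProd n (β * k) * (x / (n : ℝ) ^ β) ^ k) atTop
      (𝓝 (mittagLeffler β x)) := by
  obtain ⟨B, hB, hbound⟩ := exists_summable_bound_eulerProd_mul_div_rpow_pow hβ x
  exact tendsto_tsum_of_dominated_convergence hB
    (tendsto_eulerProd_mul_div_rpow_pow hβ.le x) hbound

lemma monotone_mittagLeffler (hβ0 : 0 < β) (hβ1 : β ≤ 1) : Monotone (mittagLeffler β) := by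
  intro x y hxy
  refine le_of_tendsto_of_tendsto (tendsto_tsum_eulerProd_mittagLeffler hβ0 x)
    (tendsto_tsum_eulerProd_mittagLeffler hβ0 y) ?_
  filter_upwards [eventually_norm_div_natCast_rpow_lt_one hβ0 x,
    eventually_norm_div_natCast_rpow_lt_one hβ0 y] with n hx hy
  exact monotoneOn_tsum_of_mem_binomialCone (eulerProd_mem_binomialCone hβ0.le hβ1 n)
    (abs_lt.mp hx) (abs_lt.mp hy) (by gcongr)

lemma hasFPowerSeriesOnBall_mittagLeffler (hβ : 0 < β) :
    HasFPowerSeriesOnBall (mittagLeffler β)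
      (FormalMultilinearSeries.ofScalars ℝ fun k : ℕ => (Gamma (1 + β * k))⁻¹) 0 ⊤ where
  r_le := by
    refine (FormalMultilinearSeries.radius_eq_top_of_summable_norm _ fun r => ?_).ge
    simpa [FormalMultilinearSeries.ofScalars_norm, div_eq_inv_mul] using
      summable_norm_pow_div_Gamma hβ r
  r_pos := ENNReal.zero_lt_top
  hasSum {y} _ := by
    simpa [FormalMultilinearSeries.ofScalars_apply_eq, mittagLeffler, div_eq_mul_inv] using
      (summable_norm_pow_div_Gamma hβ y).of_norm.hasSum

lemma analyticOnNhd_mittagLeffler (hβ : 0 < β) : AnalyticOnNhd ℝ (mittagLeffler β) univ := by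
  simpa using (hasFPowerSeriesOnBall_mittagLeffler hβ).analyticOnNhd

lemma mittagLeffler_zero_lt_mittagLeffler_one (hβ : 0 < β) :
    mittagLeffler β 0 < mittagLeffler β 1 := by
  have Gamma_pos (k : ℕ) : 0 < Gamma (1 + β * k) := Gamma_pos_of_pos (by positivity)
  refine Summable.tsum_lt_tsum (i := 1) (fun k => ?_) ?_
    (summable_norm_pow_div_Gamma hβ 0).of_norm (summable_norm_pow_div_Gamma hβ 1).of_norm
  · have := Gamma_pos k
    gcongr
    exact zero_le_one
  · simpa using Gamma_pos 1

end MittagLeffler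

theorem mittagLeffler_neg_strictAnti_general (β : ℝ) (hβ0 : 0 < β) (hβ1 : β ≤ 1) :
    StrictAnti (fun x : ℝ => mittagLeffler β (-x)) :=
  have strictMono : StrictMono (mittagLeffler β) :=
    strictMono_of_monotone_of_analyticOnNhd (monotone_mittagLeffler hβ0 hβ1)
      (analyticOnNhd_mittagLeffler hβ0) (mittagLeffler_zero_lt_mittagLeffler_one hβ0).ne
  fun _ _ hxy => strictMono (neg_lt_neg hxy)

theorem mittagLeffler_neg_strictAnti (β : ℝ) (hβ0 : 0 < β) (hβ1 : β < 1) :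
    StrictAntiOn (fun x : ℝ => mittagLeffler β (-x)) (Ioi 0) :=
  (mittagLeffler_neg_strictAnti_general β hβ0 hβ1.le).strictAntiOn _
end
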